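/- arXiv:0705.4618 — 2 statements merged into one kernel-verified Lean document; each statement's English description precedes it below -/
import Mathlib

section
/- Let G = (𝒩, w) be a closed integer octagonal graph. Define w_T : 𝒩 × 𝒩 → ℚ∞ by w_T(i,j) = min{ w(i,j), ⌊w(i,ī)/2⌋ + ⌊w(j̄,j)/2⌋ }. If w_T is an octagonal graph (i.e., consistent), then w_T is the tight closure of G: w_T is a tightly closed integer octagonal graph with w_T ⊴ w, and every tightly closed integer octagonal graph w′ with w′ ⊴ w satisfies w′ ⊴ w_T. -/
/-- Extended rationals: ℚ ∪ {+∞}. -/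
abbrev Qinf := WithTop ℚ

/-- Weight of a path (list of nodes): sum of the weights of its arcs. -/
def pathWeight {N : Type*} (w : N → N → Qinf) : List N → Qinf
  | [] => 0
  | [_] => 0
  | a :: b :: l => w a b + pathWeight w (b :: l)

/-- A proper cycle: at least two arcs, first node equals last node,
    consecutive nodes distinct. -/
def IsProperCycle {N : Type*} (l : List N) : Prop :=
  3 ≤ l.length ∧ l.head? = l.getLast? ∧ l.Chain' (· ≠ ·)

/-- A graph is consistent if it has no proper cycle of negative weight. -/
def Consistent {N : Type*} (w : N → N → Qinf) : Prop :=
  ∀ l : List N, IsProperCycle l → 0 ≤ pathWeight w l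

/-- A consistent graph is closed if self-loops have weight 0 and the
    triangle inequality holds. -/
def ClosedG {N : Type*} (w : N → N → Qinf) : Prop :=
  Consistent w ∧ (∀ i, w i i = 0) ∧ ∀ i j k, w i j ≤ w i k + w k j

/-- The "bar" involution on nodes: ī = i+1 for even i, ī = i-1 for odd i. -/
def bar {n : ℕ} (i : Fin (2 * n)) : Fin (2 * n) :=
  if _h : i.val % 2 = 0 then ⟨i.val + 1, by have := i.isLt; omega⟩
  else ⟨i.val - 1, by have := i.isLt; omega⟩

/-- Coherence: w(i,j) = w(j̄,ī). -/
def Coherent {n : ℕ} (w : Fin (2 * n) → Fin (2 * n) → Qinf) : Prop :=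
  ∀ i j, w i j = w (bar j) (bar i)

/-- An octagonal graph: consistent and coherent. -/
def Octagonal {n : ℕ} (w : Fin (2 * n) → Fin (2 * n) → Qinf) : Prop :=
  Consistent w ∧ Coherent w

/-- Pointwise order on graphs. -/
def GLe {n : ℕ} (w₁ w₂ : Fin (2 * n) → Fin (2 * n) → Qinf) : Prop :=
  ∀ i j, w₁ i j ≤ w₂ i j

/-- Halving on ℚ∞ (with +∞/2 = +∞). -/
def half (x : Qinf) : Qinf := x.map (fun q => q / 2)

/-- Floored halving on ℚ∞ (with ⌊+∞/2⌋ = +∞). -/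
def fhalf (x : Qinf) : Qinf := x.map (fun q => ((⌊q / 2⌋ : ℤ) : ℚ))

/-- Integer weights: every weight is an integer or +∞. -/
def IntWeights {n : ℕ} (w : Fin (2 * n) → Fin (2 * n) → Qinf) : Prop :=
  ∀ i j, w i j = ⊤ ∨ ∃ d : ℤ, w i j = ((d : ℚ) : Qinf)

/-- A strongly closed octagonal graph. -/
def StronglyClosed {n : ℕ} (w : Fin (2 * n) → Fin (2 * n) → Qinf) : Prop :=
  Octagonal w ∧ ClosedG w ∧ ∀ i j, 2 * w i j ≤ w i (bar i) + w (bar j) j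

/-- A tightly closed integer octagonal graph. -/
def TightlyClosed {n : ℕ} (w : Fin (2 * n) → Fin (2 * n) → Qinf) : Prop :=
  IntWeights w ∧ StronglyClosed w ∧
    ∀ i, w i (bar i) = ⊤ ∨ ∃ d : ℤ, w i (bar i) = (((2 * d : ℤ) : ℚ) : Qinf)



theorem bar_bar_aux {n : ℕ} (i : Fin (2 * n)) : bar (bar i) = i := by
  apply Fin.ext
  unfold bar
  split_ifs with h1 h2 h2
  · exfalso; change (i.val + 1) % 2 = 0 at h2; omega
  · change i.val + 1 - 1 = i.val; omega
  · change i.val - 1 + 1 = i.val; omega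
  · exfalso; change ¬ (i.val - 1) % 2 = 0 at h2; omega

theorem bar_ne_aux {n : ℕ} (i : Fin (2 * n)) : i ≠ bar i := by
  intro h
  have h := congrArg Fin.val h
  unfold bar at h
  split_ifs at h with h1 <;> simp at * <;> omega

theorem fhalf_top_aux : fhalf ⊤ = ⊤ := rfl

theorem fhalf_int_aux (d : ℤ) : fhalf ((d : ℚ) : Qinf) = (((d / 2 : ℤ) : ℚ) : Qinf) := by
  have h : ⌊(d : ℚ) / 2⌋ = d / 2 := by
    have := Rat.floor_intCast_div_natCast d 2
    simpa using this
  change (((⌊(d : ℚ) / 2⌋ : ℤ) : ℚ) : Qinf) = _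
  rw [h]

def IsI (x : Qinf) : Prop := x = ⊤ ∨ ∃ d : ℤ, x = ((d : ℚ) : Qinf)

theorem IsI_fhalf {x : Qinf} (hx : IsI x) : IsI (fhalf x) := by
  rcases hx with rfl | ⟨d, rfl⟩
  · exact Or.inl rfl
  · exact Or.inr ⟨_, fhalf_int_aux d⟩

theorem IsI_add {x y : Qinf} (hx : IsI x) (hy : IsI y) : IsI (x + y) := by
  rcases hx with rfl | ⟨d, rfl⟩
  · exact Or.inl (by simp)
  rcases hy with rfl | ⟨e, rfl⟩
  · exact Or.inl (by simp)
  · exact Or.inr ⟨d + e, by push_cast; rfl⟩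

theorem IsI_min {x y : Qinf} (hx : IsI x) (hy : IsI y) : IsI (min x y) := by
  rcases min_choice x y with h | h <;> rw [h] <;> assumption

theorem fhalf_add_le {x : Qinf} (hx : IsI x) : fhalf x + fhalf x ≤ x := by
  rcases hx with rfl | ⟨d, rfl⟩
  · simp
  · rw [fhalf_int_aux]
    norm_cast
    omega

theorem fhalf_le_step {x y z : Qinf} (hx : IsI x) (hy : IsI y) (hz : IsI z)
    (h : x ≤ y + y + z) : fhalf x ≤ y + fhalf z := by
  rcases hy with rfl | ⟨e, rfl⟩
  · simp
  rcases hz with rfl | ⟨f, rfl⟩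
  · simp [fhalf_top_aux]
  rcases hx with rfl | ⟨d, rfl⟩
  · exact absurd h (by norm_cast)
  rw [fhalf_int_aux, fhalf_int_aux]
  norm_cast at *
  omega

theorem even_le_aux {x y : Qinf} (hx : x = ⊤ ∨ ∃ d : ℤ, x = (((2 * d : ℤ) : ℚ) : Qinf))
    (hy : IsI y) (h : x ≤ y) : x ≤ fhalf y + fhalf y := by
  rcases hy with rfl | ⟨e, rfl⟩
  · simp [fhalf_top_aux]
  rcases hx with rfl | ⟨d, rfl⟩
  · exact absurd h (by simp)
  rw [fhalf_int_aux]
  norm_cast at *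
  omega

theorem two_mul_aux (a : Qinf) : 2 * a = a + a := by
  induction a using WithTop.recTopCoe with
  | top => rw [WithTop.mul_top (by norm_num)]; rfl
  | coe a =>
    have h : (2 : Qinf) = ((2 : ℚ) : Qinf) := rfl
    rw [h, ← WithTop.coe_mul, two_mul, WithTop.coe_add]

theorem half_le_aux {a b : Qinf} (h : a + a ≤ b + b) : a ≤ b := by
  induction b using WithTop.recTopCoe with
  | top => simp
  | coe b =>
    induction a using WithTop.recTopCoe with
    | top => exact absurd h (by norm_cast)
    | coe a => norm_cast at *; linarith

/-- For a closed integer octagonal graph, a single application of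
    the tightening/strong-coherence rule yields the tight closure, provided the
    result is an octagonal graph. -/
theorem tight_closure_of_closed_integer_octagonal
    {n : ℕ} (hn : 1 ≤ n) (w : Fin (2 * n) → Fin (2 * n) → Qinf)
    (hoct : Octagonal w) (hint : IntWeights w) (hcl : ClosedG w)
    (wT : Fin (2 * n) → Fin (2 * n) → Qinf)
    (hwT : ∀ i j, wT i j = min (w i j) (fhalf (w i (bar i)) + fhalf (w (bar j) j)))
    (hTo : Octagonal wT) :
    TightlyClosed wT ∧ GLe wT w ∧
      ∀ w' : Fin (2 * n) → Fin (2 * n) → Qinf,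
        TightlyClosed w' → GLe w' w → GLe w' wT := by
  have hI : ∀ i j, IsI (w i j) := hint
  obtain ⟨hcons, hcoh⟩ := hoct
  obtain ⟨-, hdiag, htri⟩ := hcl
  obtain ⟨f, hf⟩ : ∃ f : Fin (2 * n) → Qinf, ∀ i, fhalf (w i (bar i)) = f i := ⟨_, fun _ => rfl⟩
  have hfI : ∀ i, IsI (f i) := fun i => hf i ▸ IsI_fhalf (hI _ _)
  have hT : ∀ i j, wT i j = min (w i j) (f i + f (bar j)) := by
    intro i j
    rw [hwT, hf, ← hf (bar j), bar_bar_aux]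
  have hTb : ∀ i, wT i (bar i) = f i + f i := by
    intro i
    rw [hT, bar_bar_aux, min_eq_right]
    rw [← hf]
    exact fhalf_add_le (hI _ _)
  have hff : ∀ i, 0 ≤ f i + f (bar i) := by
    intro i
    have h := hTo.1 [i, bar i, i] ⟨by simp, by simp, by
      change List.IsChain _ _
      simp [bar_ne_aux i, (bar_ne_aux i).symm]⟩
    have h2 := hTb (bar i)
    rw [bar_bar_aux] at h2
    simp only [pathWeight, hTb, h2, add_zero] at h
    apply half_le_aux
    rw [add_zero]
    calc 0 ≤ _ := h
      _ = _ := by abel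
  have hstep : ∀ i k, f i ≤ w i k + f k := by
    intro i k
    rw [← hf i, ← hf k]
    apply fhalf_le_step (hI _ _) (hI _ _) (hI _ _)
    calc w i (bar i) ≤ w i k + w k (bar i) := htri _ _ _
      _ ≤ w i k + (w k (bar k) + w (bar k) (bar i)) := by gcongr; exact htri _ _ _
      _ = w i k + w i k + w k (bar k) := by rw [← hcoh i k]; abel
  have hTri : ∀ i j k, wT i j ≤ wT i k + wT k j := by
    intro i j k
    have h1 : wT i j ≤ w i j := by rw [hT]; exact min_le_left _ _
    have h2 : wT i j ≤ f i + f (bar j) := by rw [hT]; exact min_le_right _ _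
    rcases min_choice (w i k) (f i + f (bar k)) with ha | ha <;>
    rcases min_choice (w k j) (f k + f (bar j)) with hb | hb <;>
    rw [hT i k, hT k j, ha, hb]
    · exact h1.trans (htri _ _ _)
    · refine h2.trans ?_
      rw [← add_assoc]
      gcongr
      exact hstep _ _
    · refine h2.trans ?_
      rw [add_assoc]
      gcongr
      rw [hcoh k j, add_comm]
      exact hstep _ _
    · refine h2.trans ?_
      calc f i + f (bar j) = f i + 0 + f (bar j) := by rw [add_zero]
        _ ≤ f i + (f k + f (bar k)) + f (bar j) := by gcongr; exact hff k
        _ = _ := by abel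
  have hTb' : ∀ j, wT (bar j) j = f (bar j) + f (bar j) := by
    intro j
    have := hTb (bar j)
    rwa [bar_bar_aux] at this
  refine ⟨⟨?_, ⟨hTo, ⟨hTo.1, ?_, hTri⟩, ?_⟩, ?_⟩, ?_, ?_⟩
  · intro i j
    rw [hT]
    exact IsI_min (hI _ _) (IsI_add (hfI _) (hfI _))
  · intro i
    rw [hT, hdiag, min_eq_left (hff i)]
  · intro i j
    have h2 : wT i j ≤ f i + f (bar j) := by rw [hT]; exact min_le_right _ _
    rw [hTb, hTb', two_mul_aux]
    calc wT i j + wT i j ≤ (f i + f (bar j)) + (f i + f (bar j)) := add_le_add h2 h2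
      _ = _ := by abel
  · intro i
    rw [hTb]
    rcases hfI i with h | ⟨d, h⟩
    · left; simp [h]
    · right
      refine ⟨d, ?_⟩
      rw [h, two_mul]
      push_cast
      rfl
  · intro i j
    rw [hT]
    exact min_le_left _ _
  · intro w' hw' hle i j
    obtain ⟨-, ⟨-, -, hs⟩, he⟩ := hw'
    have hb : ∀ i, w' i (bar i) ≤ f i + f i := by
      intro i
      rw [← hf]
      exact even_le_aux (he i) (hI _ _) (hle _ _)
    rw [hT]
    refine le_min (hle _ _) (half_le_aux ?_)
    have h1 := hb (bar j)
    rw [bar_bar_aux] at h1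
    have h2 := hs i j
    rw [two_mul_aux] at h2
    calc _ ≤ _ := h2
      _ ≤ (f i + f i) + (f (bar j) + f (bar j)) := add_le_add (hb i) h1
      _ = _ := by abel
end

section
/- Let G = (𝒩, w) be an octagonal graph such that the set of strongly closed octagonal graphs w′ with w′ ⊴ w is nonempty, and let w_S be the pointwise supremum of this set. Then w_S is itself a strongly closed octagonal graph (so strong closure is well defined and is the greatest strongly closed octagonal graph below w); moreover the assignment w ↦ w_S is monotone with respect to ⊴, reductive (w_S ⊴ w), and idempotent ((w_S)_S = w_S). -/
theorem pathWeight_mono {N : Type*} {w₁ w₂ : N → N → Qinf} (h : ∀ i j, w₁ i j ≤ w₂ i j) :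
    ∀ l : List N, pathWeight w₁ l ≤ pathWeight w₂ l
  | [] => le_refl _
  | [_] => le_refl _
  | a :: b :: l => add_le_add (h a b) (pathWeight_mono h (b :: l))

theorem two_mul_le_coe_iff (x : Qinf) (r : ℚ) :
    2 * x ≤ (r : Qinf) ↔ x ≤ ((r / 2 : ℚ) : Qinf) := by
  have h2 : (2 : Qinf) = ((2 : ℚ) : Qinf) := rfl
  rw [h2]
  induction x using WithTop.recTopCoe with
  | top =>
    rw [WithTop.mul_top (by norm_num [← WithTop.coe_zero])]
    simp
  | coe a =>
    rw [← WithTop.coe_mul, WithTop.coe_le_coe, WithTop.coe_le_coe]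
    constructor <;> intro h <;> linarith

/-- Strong closure is well defined (the pointwise supremum of all
    strongly closed octagonal graphs below w is itself strongly closed, hence
    the greatest such graph), and the strong closure operator is monotone,
    reductive and idempotent. -/
theorem strong_closure_kernel_operator
    {n : ℕ} (hn : 1 ≤ n) (w : Fin (2 * n) → Fin (2 * n) → Qinf)
    (hoct : Octagonal w)
    (hne : ∃ w' : Fin (2 * n) → Fin (2 * n) → Qinf,
      StronglyClosed w' ∧ GLe w' w)
    (wS : Fin (2 * n) → Fin (2 * n) → Qinf)
    (hlub : ∀ i j, IsLUB
      {q : Qinf | ∃ w' : Fin (2 * n) → Fin (2 * n) → Qinf,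
        StronglyClosed w' ∧ GLe w' w ∧ q = w' i j} (wS i j)) :
    (StronglyClosed wS ∧ GLe wS w ∧
      ∀ w' : Fin (2 * n) → Fin (2 * n) → Qinf,
        StronglyClosed w' → GLe w' w → GLe w' wS) ∧
    (∀ w₂ wS₂ : Fin (2 * n) → Fin (2 * n) → Qinf,
      Octagonal w₂ →
      (∀ i j, IsLUB
        {q : Qinf | ∃ w' : Fin (2 * n) → Fin (2 * n) → Qinf,
          StronglyClosed w' ∧ GLe w' w₂ ∧ q = w' i j} (wS₂ i j)) →
      GLe w w₂ → GLe wS wS₂) ∧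
    (∀ i j, IsLUB
      {q : Qinf | ∃ w' : Fin (2 * n) → Fin (2 * n) → Qinf,
        StronglyClosed w' ∧ GLe w' wS ∧ q = w' i j} (wS i j)) := by
  have hub : ∀ w' : Fin (2 * n) → Fin (2 * n) → Qinf,
      StronglyClosed w' → GLe w' w → GLe w' wS :=
    fun w' h1 h2 i j => (hlub i j).1 ⟨w', h1, h2, rfl⟩
  have hred : GLe wS w := by
    intro i j
    apply (hlub i j).2
    rintro q ⟨w', _, h2, rfl⟩
    exact h2 i j
  have hcons : Consistent wS := by
    obtain ⟨w', h1, h2⟩ := hne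
    intro l hl
    exact (h1.1.1 l hl).trans (pathWeight_mono (hub w' h1 h2) l)
  have hcoh : Coherent wS := by
    intro i j
    apply le_antisymm
    · apply (hlub i j).2
      rintro q ⟨w', h1, h2, rfl⟩
      rw [h1.1.2 i j]
      exact hub w' h1 h2 _ _
    · apply (hlub _ _).2
      rintro q ⟨w', h1, h2, rfl⟩
      rw [← h1.1.2 i j]
      exact hub w' h1 h2 _ _
  have hsc : StronglyClosed wS := by
    refine ⟨⟨hcons, hcoh⟩, ⟨hcons, ?_, ?_⟩, ?_⟩
    · intro i
      apply le_antisymm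
      · apply (hlub i i).2
        rintro q ⟨w', h1, h2, rfl⟩
        exact (h1.2.1.2.1 i).le
      · obtain ⟨w', h1, h2⟩ := hne
        rw [← h1.2.1.2.1 i]
        exact hub w' h1 h2 i i
    · intro i j k
      apply (hlub i j).2
      rintro q ⟨w', h1, h2, rfl⟩
      exact (h1.2.1.2.2 i j k).trans (add_le_add (hub w' h1 h2 _ _) (hub w' h1 h2 _ _))
    · intro i j
      have key : ∀ w' : Fin (2 * n) → Fin (2 * n) → Qinf, StronglyClosed w' → GLe w' w →
          2 * w' i j ≤ wS i (bar i) + wS (bar j) j := fun w' h1 h2 =>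
        (h1.2.2 i j).trans (add_le_add (hub w' h1 h2 _ _) (hub w' h1 h2 _ _))
      generalize wS i (bar i) + wS (bar j) j = r at key ⊢
      induction r using WithTop.recTopCoe with
      | top => exact le_top
      | coe r =>
        rw [two_mul_le_coe_iff]
        apply (hlub i j).2
        rintro q ⟨w', h1, h2, rfl⟩
        exact (two_mul_le_coe_iff _ _).1 (key w' h1 h2)
  refine ⟨⟨hsc, hred, hub⟩, ?_, ?_⟩
  · intro w₂ wS₂ _ hlub₂ hle i j
    exact (hlub₂ i j).1 ⟨wS, hsc, fun a b => (hred a b).trans (hle a b), rfl⟩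
  · intro i j
    constructor
    · rintro q ⟨w', _, h2, rfl⟩
      exact h2 i j
    · intro b hb
      exact hb ⟨wS, hsc, fun _ _ => le_refl _, rfl⟩
end
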